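/- Let K be a field of characteristic zero equipped with a derivation δ : K → K, let t ∈ K with δ(t) = 1, and let v₁, v₂, v₃, v₄ ∈ K be constants (δ(vᵢ) = 0) with v₁ + v₂ + v₃ + v₄ = 0. Suppose Q, P ∈ K with Q ≠ 1 satisfy t·δ(Q) = 2Q(Q−1)²P + (3v₁ + v₂)Q² − (t + 4v₁)Q + v₁ − v₂ and t·δ(P) = (−3Q² + 4Q − 1)P² − 2(3v₁ + v₂)QP + (t + 4v₁)P − (v₃ − v₁)(v₄ − v₁). Define q = Q/(Q−1) and p = −(Q−1)²·P + (v₃ − v₁)(Q−1). Then t·δ(p) = −2qp² + p² − 2t·p·q + t·p − (v₁ − v₂ − v₃ + v₄)·p + (v₃ − v₁)·t. -/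

import Mathlib

/-!
Put `m = v₃ - v₁ - (Q - 1)P`. Then `p = (Q - 1)m`, and `q(Q - 1) = Q` gives `qp = Qm`, so the
right-hand side of the transformed equation is a polynomial in `Q`, `m`, `t` and the `vᵢ`. The
product rule and the original system turn the left-hand side into a polynomial in `Q`, `P`, `t` and
the `vᵢ`, and `v₁ + v₂ + v₃ + v₄ = 0` makes the two agree.
-/

/-- An additive map satisfying the Leibniz rule, bundled as a derivation. The base ring is `ℤ`, over
which linearity is just additivity. -/
def derivationOfLeibniz {A : Type*} [CommRing A] (δ : A → A)
    (hadd : ∀ a b : A, δ (a + b) = δ a + δ b)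
    (hleib : ∀ a b : A, δ (a * b) = a * δ b + δ a * b) : Derivation ℤ A A :=
  Derivation.mk' (AddMonoidHom.mk' δ hadd).toIntLinearMap fun a b =>
    (hleib a b).trans (congrArg (a * δ b + ·) (mul_comm (δ a) b))

section Substitution

variable {R A : Type*} [CommSemiring R] [CommRing A] [Algebra R A]

theorem derivation_neg_sq_mul_add_const_mul (D : Derivation R A A) {c : A} (hc : D c = 0)
    (Q P : A) :
    D (-(Q - 1) ^ 2 * P + c * (Q - 1)) =
      (c - 2 * (Q - 1) * P) * D Q - (Q - 1) ^ 2 * D P := by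
  simp only [map_add, map_sub, map_neg, Derivation.leibniz, Derivation.leibniz_pow,
    Derivation.map_one_eq_zero, hc, smul_eq_mul, nsmul_eq_mul]
  ring

/-- Here `D` plays the role of `t · d/dt`. The equation `q(Q - 1) = Q` replaces `q = Q/(Q - 1)`;
in a commutative ring it forces `Q - 1` to be a unit with inverse `q - 1`. -/
theorem painleveV_substitution_second_general (D : Derivation R A A)
    {t v₁ v₂ v₃ v₄ Q P q p : A} (hv₁ : D v₁ = 0) (hv₃ : D v₃ = 0)
    (hsum : v₁ + v₂ + v₃ + v₄ = 0)
    (hQ : D Q = 2 * Q * (Q - 1) ^ 2 * P + (3 * v₁ + v₂) * Q ^ 2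
      - (t + 4 * v₁) * Q + v₁ - v₂)
    (hP : D P = (-3 * Q ^ 2 + 4 * Q - 1) * P ^ 2 - 2 * (3 * v₁ + v₂) * Q * P
      + (t + 4 * v₁) * P - (v₃ - v₁) * (v₄ - v₁))
    (hq : q * (Q - 1) = Q) (hp : p = -(Q - 1) ^ 2 * P + (v₃ - v₁) * (Q - 1)) :
    D p = -2 * q * p ^ 2 + p ^ 2 - 2 * t * p * q + t * p
      - (v₁ - v₂ - v₃ + v₄) * p + (v₃ - v₁) * t := by
  have hconst : D (v₃ - v₁) = 0 := by rw [map_sub, hv₃, hv₁, sub_zero]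
  obtain ⟨m, hm⟩ : ∃ m, m = v₃ - v₁ - (Q - 1) * P := ⟨_, rfl⟩
  have hpm : p = (Q - 1) * m := by rw [hp, hm]; ring
  have hqp : q * p = Q * m := by rw [hpm, ← mul_assoc, hq]
  calc
    D p = (v₃ - v₁ - 2 * (Q - 1) * P) * D Q - (Q - 1) ^ 2 * D P := by
      rw [hp, derivation_neg_sq_mul_add_const_mul D hconst]
    _ = -2 * (Q * m) * ((Q - 1) * m) + ((Q - 1) * m) ^ 2 - 2 * t * (Q * m) + t * ((Q - 1) * m)
        - (v₁ - v₂ - v₃ + v₄) * ((Q - 1) * m) + (v₃ - v₁) * t := by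
      rw [hQ, hP, hm]
      linear_combination
        ((Q - 1) ^ 2 * (v₃ - v₁) + (Q - 1) * (v₃ - v₁ - (Q - 1) * P)) * hsum
    _ = -2 * q * p ^ 2 + p ^ 2 - 2 * t * p * q + t * p
        - (v₁ - v₂ - v₃ + v₄) * p + (v₃ - v₁) * t := by
      rw [← hqp, ← hpm]
      ring

end Substitution

/-- Under the substitution `q = Q/(Q−1)`, `p = −(Q−1)²P + (v₃−v₁)(Q−1)`, the
second equation of the Painlevé V Hamiltonian system transforms to
`t·p' = −2qp² + p² − 2tpq + tp − (v₁−v₂−v₃+v₄)p + (v₃−v₁)t`. -/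
theorem painleveV_substitution_second
    {K : Type*} [Field K] [CharZero K] (δ : K → K)
    (hadd : ∀ a b : K, δ (a + b) = δ a + δ b)
    (hleib : ∀ a b : K, δ (a * b) = a * δ b + δ a * b)
    (t : K) (ht : δ t = 1)
    (v₁ v₂ v₃ v₄ : K) (hv₁ : δ v₁ = 0) (hv₂ : δ v₂ = 0) (hv₃ : δ v₃ = 0)
    (hv₄ : δ v₄ = 0) (hsum : v₁ + v₂ + v₃ + v₄ = 0)
    (Q P : K) (hQ1 : Q ≠ 1)
    (hQ : t * δ Q = 2 * Q * (Q - 1) ^ 2 * P + (3 * v₁ + v₂) * Q ^ 2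
      - (t + 4 * v₁) * Q + v₁ - v₂)
    (hP : t * δ P = (-3 * Q ^ 2 + 4 * Q - 1) * P ^ 2 - 2 * (3 * v₁ + v₂) * Q * P
      + (t + 4 * v₁) * P - (v₃ - v₁) * (v₄ - v₁)) :
    t * δ (-(Q - 1) ^ 2 * P + (v₃ - v₁) * (Q - 1))
      = -2 * (Q / (Q - 1)) * (-(Q - 1) ^ 2 * P + (v₃ - v₁) * (Q - 1)) ^ 2
        + (-(Q - 1) ^ 2 * P + (v₃ - v₁) * (Q - 1)) ^ 2
        - 2 * t * (-(Q - 1) ^ 2 * P + (v₃ - v₁) * (Q - 1)) * (Q / (Q - 1))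
        + t * (-(Q - 1) ^ 2 * P + (v₃ - v₁) * (Q - 1))
        - (v₁ - v₂ - v₃ + v₄) * (-(Q - 1) ^ 2 * P + (v₃ - v₁) * (Q - 1))
        + (v₃ - v₁) * t := by
  exact painleveV_substitution_second_general (t • derivationOfLeibniz δ hadd hleib)
    (mul_eq_zero_of_right t hv₁) (mul_eq_zero_of_right t hv₃) hsum hQ hP
    (div_mul_cancel₀ Q (sub_ne_zero.mpr hQ1)) rfl
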